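/- Let E, A be h×h real matrices, B an h×k real matrix, and R_z an invertible h×h real matrix with R_zᵀEᵀ = E·R_z ⪰ 0 and A·R_z + R_zᵀAᵀ − B·Bᵀ ≺ 0. Set K_u = −(1/2)·Bᵀ·R_z⁻¹. Then R̂ := R_z⁻¹ satisfies EᵀR̂ = R̂ᵀE ⪰ 0 and R̂ᵀ(A + B·K_u) + (A + B·K_u)ᵀR̂ = R_z⁻ᵀ(A·R_z + R_zᵀAᵀ − B·Bᵀ)·R_z⁻¹ ≺ 0; consequently the pair (E, A + B·K_u) is regular, impulse-free, and asymptotically stable. -/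

import Mathlib

open Polynomial Matrix

/-- The pencil polynomial `p(X) = det(X·E − A)` of the pair `(E, A)`. -/
noncomputable def pencil {n : Type*} [Fintype n] [DecidableEq n]
    (E A : Matrix n n ℝ) : Polynomial ℝ :=
  (Matrix.of fun i j => Polynomial.X * Polynomial.C (E i j) - Polynomial.C (A i j)).det

/-- The pair `(E, A)` is regular. -/
def RegularPair {n : Type*} [Fintype n] [DecidableEq n] (E A : Matrix n n ℝ) : Prop :=
  pencil E A ≠ 0

/-- The pair `(E, A)` is impulse-free. -/
def ImpulseFreePair {n : Type*} [Fintype n] [DecidableEq n] (E A : Matrix n n ℝ) : Prop :=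
  pencil E A ≠ 0 ∧ (pencil E A).natDegree = E.rank

/-- The pair `(E, A)` is asymptotically stable. -/
def AsympStablePair {n : Type*} [Fintype n] [DecidableEq n] (E A : Matrix n n ℝ) : Prop :=
  ∀ lam : ℂ, (lam • E.map (Complex.ofReal) - A.map (Complex.ofReal)).det = 0 → lam.re < 0

section helpers

set_option linter.unusedSimpArgs false
set_option linter.unusedSectionVars false

variable {n m : Type*} [Fintype n] [DecidableEq n] [Fintype m] [DecidableEq m]

lemma pencil_eq (E A : Matrix n n ℝ) :
    pencil E A = ((X : ℝ[X]) • (C.mapMatrix E) - C.mapMatrix A).det := by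
  unfold pencil
  congr 1

lemma pencil_mul (S T E A : Matrix n n ℝ) :
    pencil (S * E * T) (S * A * T) = C S.det * pencil E A * C T.det := by
  rw [pencil_eq, pencil_eq, RingHom.map_det, RingHom.map_det, ← det_mul, ← det_mul]
  congr 1
  simp only [map_mul, mul_sub, sub_mul, Matrix.mul_smul, Matrix.smul_mul]

lemma pencil_submatrix (e : m ≃ n) (E A : Matrix n n ℝ) :
    pencil (E.submatrix e e) (A.submatrix e e) = pencil E A := by
  unfold pencil
  rw [← det_submatrix_equiv_self e]
  rfl

lemma quad_neg {Q : Matrix n n ℝ} (hQ : (-(Q + Qᵀ)).PosDef) {x : n → ℝ} (hx : x ≠ 0) :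
    x ⬝ᵥ Q *ᵥ x < 0 := by
  have h := hQ.dotProduct_mulVec_pos hx
  have e : x ⬝ᵥ Qᵀ *ᵥ x = x ⬝ᵥ Q *ᵥ x := by
    rw [mulVec_transpose, dotProduct_comm, ← dotProduct_mulVec]
  simp only [star_trivial, neg_mulVec, add_mulVec, dotProduct_neg, dotProduct_add, e] at h
  linarith

lemma det_ne {Q : Matrix n n ℝ} (hQ : (-(Q + Qᵀ)).PosDef) : Q.det ≠ 0 := by
  intro h
  obtain ⟨v, hv, h0⟩ := exists_mulVec_eq_zero_iff.2 h
  have := quad_neg hQ hv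
  simp [h0] at this

lemma natDegree_block (D : Matrix m m ℝ) (hD : D.det ≠ 0) (Q₁ : Matrix m m ℝ)
    (Q₂ : Matrix m n ℝ) (Q₃ : Matrix n m ℝ) (Q₄ : Matrix n n ℝ) (h4 : Q₄.det ≠ 0) :
    (pencil (fromBlocks D 0 0 0) (fromBlocks Q₁ Q₂ Q₃ Q₄)).natDegree = Fintype.card m := by
  have hD' : IsUnit D.det := hD.isUnit
  have h4' : IsUnit Q₄.det := h4.isUnit
  let S : Matrix (m ⊕ n) (m ⊕ n) ℝ := fromBlocks 1 (-(Q₂ * Q₄⁻¹)) 0 1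
  let W := Q₁ - Q₂ * Q₄⁻¹ * Q₃
  have hS : S.det = 1 := by simp [S]
  have key := pencil_mul S 1 (fromBlocks D 0 0 0) (fromBlocks Q₁ Q₂ Q₃ Q₄)
  have e1 : S * fromBlocks D 0 0 0 = fromBlocks D 0 0 0 := by simp [S, fromBlocks_multiply]
  have e2 : S * fromBlocks Q₁ Q₂ Q₃ Q₄ = fromBlocks W 0 Q₃ Q₄ := by
    simp only [S, W, fromBlocks_multiply]
    congr 1
    · simp [sub_eq_add_neg, Matrix.mul_assoc]
    · simp [Matrix.mul_assoc, nonsing_inv_mul _ h4']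
    · simp
    · simp
  rw [mul_one, mul_one, e1, e2, hS, det_one, map_one, one_mul, mul_one] at key
  rw [← key]
  have e3 : pencil (fromBlocks D 0 0 0) (fromBlocks W 0 Q₃ Q₄)
      = pencil D W * C ((-Q₄).det) := by
    rw [pencil_eq, pencil_eq, RingHom.map_det, ← det_fromBlocks_zero₁₂ _ (-(Q₃.map C))]
    congr 1
    ext i j
    rcases i with i | i <;> rcases j with j | j <;> simp
  have e4 : pencil D W = C D.det * (D⁻¹ * W).charpoly := by
    have := pencil_mul D 1 1 (D⁻¹ * W)
    rw [mul_one, mul_one, mul_one, mul_nonsing_inv_cancel_left _ _ hD', det_one, map_one, mul_one] at this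
    rw [this, pencil_eq, Matrix.charpoly, charmatrix]
    congr 3
    ext i j
    simp [Matrix.one_apply, diagonal_apply, apply_ite]
  have h5 : (-Q₄).det ≠ 0 := by
    rw [det_neg]; exact mul_ne_zero (by simp) h4
  rw [e3, e4, natDegree_mul_C h5, natDegree_C_mul hD, charpoly_natDegree_eq_dim]

lemma natDegree_diag (d : n → ℝ) (Q : Matrix n n ℝ) (hQ : (-(Q + Qᵀ)).PosDef) :
    (pencil (diagonal d) Q).natDegree = Fintype.card {i // d i ≠ 0} := by
  classical
  let e := Equiv.sumCompl (fun i => d i ≠ 0)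
  rw [← pencil_submatrix e, ← fromBlocks_toBlocks (Q.submatrix e e)]
  have : (diagonal d).submatrix e e
      = fromBlocks (diagonal fun i : {i // d i ≠ 0} => d i) 0 0 0 := by
    rw [submatrix_diagonal_equiv]
    ext i j
    rcases i with i | i <;> rcases j with j | j <;> simp [e, diagonal_apply]
    · intro _
      have := i.2
      simpa using this
  rw [this]
  apply natDegree_block
  · rw [det_diagonal]
    exact Finset.prod_ne_zero_iff.2 fun i _ => i.2
  · apply det_ne
    exact hQ.submatrix (e := fun i : {i // ¬ d i ≠ 0} => (i : n)) Subtype.val_injective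

lemma natDegree_posdef (P Q : Matrix n n ℝ) (hP : P.IsHermitian) (hQ : (-(Q + Qᵀ)).PosDef) :
    (pencil P Q).natDegree = P.rank := by
  let U : Matrix n n ℝ := hP.eigenvectorUnitary
  have hU : Uᵀ * U = 1 := by
    have := Unitary.coe_star_mul_self hP.eigenvectorUnitary
    rwa [star_eq_conjTranspose, conjTranspose_eq_transpose_of_trivial] at this
  have hU' : U * Uᵀ = 1 := mul_eq_one_comm.1 hU
  have hs : P = U * diagonal hP.eigenvalues * Uᵀ := by
    have := hP.spectral_theorem
    rw [Unitary.conjStarAlgAut_apply, star_eq_conjTranspose,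
      conjTranspose_eq_transpose_of_trivial] at this
    exact this
  have hd : U.det ≠ 0 := by
    intro h
    have := congrArg det hU
    simp [h] at this
  have hQ2 : Q = U * (Uᵀ * Q * U) * Uᵀ := by
    calc Q = (U * Uᵀ) * Q * (U * Uᵀ) := by simp [hU']
      _ = _ := by simp only [Matrix.mul_assoc]
  have hinj : Function.Injective U.mulVec := by
    apply mulVec_injective_of_isUnit
    rw [isUnit_iff_isUnit_det]; exact hd.isUnit
  have hQ3 : (-(Uᵀ * Q * U + (Uᵀ * Q * U)ᵀ)).PosDef := by
    have := hQ.conjTranspose_mul_mul_same hinj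
    rw [conjTranspose_eq_transpose_of_trivial] at this
    convert this using 1
    simp [Matrix.mul_add, Matrix.add_mul, Matrix.mul_assoc]
  rw [hP.rank_eq_card_non_zero_eigs, ← natDegree_diag _ _ hQ3]
  conv_lhs => rw [hs, hQ2, pencil_mul]
  rw [natDegree_mul_C (by rwa [det_transpose]), natDegree_C_mul hd]

lemma stable_posdef (P Q : Matrix n n ℝ) (hP : P.PosSemidef) (hQ : (-(Q + Qᵀ)).PosDef) :
    AsympStablePair P Q := by
  intro lam h
  obtain ⟨v, hv, h0⟩ := exists_mulVec_eq_zero_iff.2 h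
  rw [sub_mulVec, smul_mulVec] at h0
  let x : n → ℝ := fun i => (v i).re
  let y : n → ℝ := fun i => (v i).im
  have hre : lam.re • (P *ᵥ x) - lam.im • (P *ᵥ y) = Q *ᵥ x := by
    ext i
    have := congrArg Complex.re (congrFun h0 i)
    simp only [sub_mulVec, smul_mulVec, Pi.sub_apply, Pi.smul_apply, mulVec, dotProduct, map_apply,
      smul_eq_mul, Complex.sub_re, Complex.mul_re, Complex.re_sum, Complex.im_sum,
      Complex.ofReal_re, Complex.ofReal_im, Complex.im_ofReal_mul, zero_mul, sub_zero,
      Pi.zero_apply, Complex.zero_re, zero_add, add_zero] at this ⊢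
    linarith
  have him : lam.re • (P *ᵥ y) + lam.im • (P *ᵥ x) = Q *ᵥ y := by
    ext i
    have := congrArg Complex.im (congrFun h0 i)
    simp only [sub_mulVec, smul_mulVec, Pi.sub_apply, Pi.add_apply, Pi.smul_apply, mulVec, dotProduct, map_apply,
      smul_eq_mul, Complex.sub_im, Complex.mul_im, Complex.mul_re, Complex.re_sum, Complex.im_sum,
      Complex.ofReal_re, Complex.ofReal_im, Complex.im_ofReal_mul, zero_mul, sub_zero, add_zero,
      Pi.zero_apply, Complex.zero_im, zero_add] at this ⊢
    linarith
  have sym : x ⬝ᵥ P *ᵥ y = y ⬝ᵥ P *ᵥ x := by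
    have hT : Pᵀ = P := by
      have := hP.1.eq
      rwa [conjTranspose_eq_transpose_of_trivial] at this
    conv_lhs => rw [← hT]
    rw [mulVec_transpose, dotProduct_comm, ← dotProduct_mulVec]
  have a1 := congrArg (fun w => x ⬝ᵥ w) hre
  have a2 := congrArg (fun w => y ⬝ᵥ w) him
  simp only [dotProduct_sub, dotProduct_add, dotProduct_smul, smul_eq_mul] at a1 a2
  have px := hP.dotProduct_mulVec_nonneg x
  have py := hP.dotProduct_mulVec_nonneg y
  simp only [star_trivial] at px py
  have qle : ∀ z : n → ℝ, z ⬝ᵥ Q *ᵥ z ≤ 0 := by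
    intro z
    by_cases hz : z = 0
    · simp [hz]
    · exact (quad_neg hQ hz).le
  have qlt : x ⬝ᵥ Q *ᵥ x + y ⬝ᵥ Q *ᵥ y < 0 := by
    by_cases hx : x = 0
    · have hy : y ≠ 0 := by
        intro hy
        apply hv
        ext i
        exact Complex.ext (congrFun hx i) (congrFun hy i)
      linarith [quad_neg hQ hy, qle x]
    · linarith [quad_neg hQ hx, qle y]
  rw [sym] at a1
  by_contra hc
  push Not at hc
  nlinarith [mul_nonneg hc px, mul_nonneg hc py]

end helpers

/-- With `K_u = −(1/2) Bᵀ R_z⁻¹`, `R_zᵀEᵀ = E R_z ⪰ 0` and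
`A R_z + R_zᵀAᵀ − B Bᵀ ≺ 0`, the matrix `R̂ = R_z⁻¹` satisfies the dual Lyapunov
conditions and `(E, A + B K_u)` is regular, impulse-free and asymptotically stable. -/
theorem stmt10 (h k : ℕ) (E A : Matrix (Fin h) (Fin h) ℝ)
    (B : Matrix (Fin h) (Fin k) ℝ)
    (Rz : Matrix (Fin h) (Fin h) ℝ) (hRz : IsUnit Rz.det)
    (h1 : Rzᵀ * Eᵀ = E * Rz) (h2 : (E * Rz).PosSemidef)
    (h3 : (-(A * Rz + Rzᵀ * Aᵀ - B * Bᵀ)).PosDef)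
    (Ku : Matrix (Fin k) (Fin h) ℝ) (hKu : Ku = -(1 / 2 : ℝ) • (Bᵀ * Rz⁻¹)) :
    (Eᵀ * Rz⁻¹ = (Rz⁻¹)ᵀ * E) ∧ (Eᵀ * Rz⁻¹).PosSemidef ∧
      ((Rz⁻¹)ᵀ * (A + B * Ku) + (A + B * Ku)ᵀ * Rz⁻¹
        = (Rz⁻¹)ᵀ * (A * Rz + Rzᵀ * Aᵀ - B * Bᵀ) * Rz⁻¹) ∧
      (-((Rz⁻¹)ᵀ * (A + B * Ku) + (A + B * Ku)ᵀ * Rz⁻¹)).PosDef ∧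
      RegularPair E (A + B * Ku) ∧
      ImpulseFreePair E (A + B * Ku) ∧
      AsympStablePair E (A + B * Ku) := by
  set R := Rz⁻¹ with hR
  have r1 : Rz * R = 1 := mul_nonsing_inv _ hRz
  have r2 : R * Rz = 1 := nonsing_inv_mul _ hRz
  have r3 : Rᵀ * Rzᵀ = 1 := by rw [← transpose_mul, r1, transpose_one]
  have hRd : R.det ≠ 0 := by
    intro h0
    have := congrArg det r1
    simp [h0] at this
  have hinj : Function.Injective R.mulVec := by
    apply mulVec_injective_of_isUnit
    rw [isUnit_iff_isUnit_det]; exact hRd.isUnit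
  have c1 : Eᵀ * R = Rᵀ * E := by
    calc Eᵀ * R = (Rᵀ * Rzᵀ) * Eᵀ * R := by rw [r3, Matrix.one_mul]
      _ = Rᵀ * (Rzᵀ * Eᵀ) * R := by simp only [Matrix.mul_assoc]
      _ = Rᵀ * E * (Rz * R) := by rw [h1]; simp only [Matrix.mul_assoc]
      _ = _ := by rw [r1, Matrix.mul_one]
  have c2 : (Eᵀ * R).PosSemidef := by
    have := h2.conjTranspose_mul_mul_same R
    rw [conjTranspose_eq_transpose_of_trivial] at this
    convert this using 1
    rw [c1, Matrix.mul_assoc, Matrix.mul_assoc, r1, Matrix.mul_one]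
  have c3 : Rᵀ * (A + B * Ku) + (A + B * Ku)ᵀ * R
        = Rᵀ * (A * Rz + Rzᵀ * Aᵀ - B * Bᵀ) * R := by
    have t1 : Rᵀ * (A * Rz) * R = Rᵀ * A := by
      rw [Matrix.mul_assoc, Matrix.mul_assoc, r1, Matrix.mul_one]
    have t2 : Rᵀ * (Rzᵀ * Aᵀ) * R = Aᵀ * R := by
      rw [← Matrix.mul_assoc Rᵀ, r3, Matrix.one_mul]
    rw [Matrix.mul_sub, Matrix.mul_add _ (A * Rz), Matrix.sub_mul, Matrix.add_mul (Rᵀ * (A * Rz)), t1, t2, hKu]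
    simp only [transpose_add, transpose_mul, transpose_smul, transpose_transpose, Matrix.mul_add,
      Matrix.add_mul, Matrix.mul_smul, Matrix.smul_mul, Matrix.mul_assoc]
    module
  have c4 : (-(Rᵀ * (A + B * Ku) + (A + B * Ku)ᵀ * R)).PosDef := by
    have := h3.conjTranspose_mul_mul_same hinj
    rw [conjTranspose_eq_transpose_of_trivial] at this
    rw [c3]
    convert this using 1
    simp only [Matrix.mul_neg, Matrix.neg_mul]
  set M := A + B * Ku with hM
  have hP : (Rᵀ * E).PosSemidef := c1 ▸ c2
  have hQ : (-(Rᵀ * M + (Rᵀ * M)ᵀ)).PosDef := by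
    rwa [transpose_mul, transpose_transpose]
  have hRt : Rᵀ.det ≠ 0 := by rwa [det_transpose]
  have hst : AsympStablePair E M := by
    intro lam hl
    apply stable_posdef _ _ hP hQ lam
    have : lam • (Rᵀ * E).map Complex.ofReal - (Rᵀ * M).map Complex.ofReal
        = Rᵀ.map Complex.ofReal * (lam • E.map Complex.ofReal - M.map Complex.ofReal) := by
      have e1 := Matrix.map_mul (L := Rᵀ) (M := E) (f := Complex.ofRealHom)
      have e2 := Matrix.map_mul (L := Rᵀ) (M := M) (f := Complex.ofRealHom)
      change (Rᵀ * E).map Complex.ofReal = Rᵀ.map Complex.ofReal * E.map Complex.ofReal at e1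
      change (Rᵀ * M).map Complex.ofReal = Rᵀ.map Complex.ofReal * M.map Complex.ofReal at e2
      rw [e1, e2, Matrix.mul_sub, Matrix.mul_smul]
    rw [this, det_mul, hl, mul_zero]
  have hpm : pencil (Rᵀ * E) (Rᵀ * M) = C Rᵀ.det * pencil E M := by
    have := pencil_mul Rᵀ 1 E M
    simpa using this
  have hreg : pencil E M ≠ 0 := by
    intro h0
    have hMd : M.det ≠ 0 := by
      have := det_ne hQ
      rw [det_mul] at this
      exact right_ne_zero_of_mul this
    have := congrArg (Polynomial.evalRingHom 0) h0
    rw [pencil_eq, RingHom.map_det, map_zero] at this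
    have e : (Polynomial.evalRingHom 0).mapMatrix
        ((X : ℝ[X]) • (C.mapMatrix E) - C.mapMatrix M) = -M := by
      ext i j
      simp
    rw [e, det_neg] at this
    exact mul_ne_zero (by simp) hMd this
  refine ⟨c1, c2, c3, c4, hreg, ⟨hreg, ?_⟩, hst⟩
  have hdeg := natDegree_posdef _ _ hP.1 hQ
  rw [hpm, natDegree_C_mul hRt, rank_mul_eq_right_of_isUnit_det _ _ hRt.isUnit] at hdeg
  exact hdeg
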